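/- Fix 1 ≤ k ≤ min(m,n). For every X ∈ M_m ⊗ M_n, the dual norm of the S(k)-norm equals the norm ‖·‖_{γ,k}: that is, ‖X‖_{S(k)}° = ‖X‖_{γ,k}. -/

import Mathlib

open scoped Kronecker ComplexOrder
open Matrix

namespace Ent

variable {ι κ : Type*} [Fintype ι] [Fintype κ]

/-- Inner product ⟨v,w⟩ = Σᵢ conj(v i) * (w i) (conjugate-linear in the first argument). -/
noncomputable def vinner (v w : ι → ℂ) : ℂ := dotProduct (star v) w

/-- An elementary (product) tensor a ⊗ b in ℂ^ι ⊗ ℂ^κ. -/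
def prodVec (a : ι → ℂ) (b : κ → ℂ) : ι × κ → ℂ := fun p => a p.1 * b p.2

/-- `v` has Schmidt rank at most `k`. -/
def SchmidtRankLE (k : ℕ) (v : ι × κ → ℂ) : Prop :=
  ∃ (a : Fin k → ι → ℂ) (b : Fin k → κ → ℂ), v = ∑ i, prodVec (a i) (b i)

/-- The rank-one operator |v⟩⟨w|. -/
noncomputable def ketBra (v : ι → ℂ) (w : κ → ℂ) : Matrix ι κ ℂ :=
  Matrix.vecMulVec v (star w)

/-- A finite family of vectors is orthonormal. -/
def Orthonormal' {N : Type*} [DecidableEq N] (v : N → ι → ℂ) : Prop :=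
  ∀ i j, vinner (v i) (v j) = if i = j then 1 else 0

/-- The S(k)-norm of `X ∈ M_ι ⊗ M_κ`. -/
noncomputable def SkNorm (k : ℕ) (X : Matrix (ι × κ) (ι × κ) ℂ) : ℝ :=
  sSup { r | ∃ v w : ι × κ → ℂ, vinner v v = 1 ∧ vinner w w = 1 ∧
    SchmidtRankLE k v ∧ SchmidtRankLE k w ∧
    r = ‖vinner v (X.mulVec w)‖ }

/-- The product numerical radius r_k^⊗. -/
noncomputable def prodRad (k : ℕ) (Y : Matrix (ι × κ) (ι × κ) ℂ) : ℝ :=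
  sSup { r | ∃ v : ι × κ → ℂ, vinner v v = 1 ∧ SchmidtRankLE k v ∧
    r = ‖vinner v (Y.mulVec v)‖ }

/-- The norm ‖·‖_{γ,k}. -/
noncomputable def gammaNorm (k : ℕ) (X : Matrix (ι × κ) (ι × κ) ℂ) : ℝ :=
  sInf { r | ∃ (N : ℕ) (c : Fin N → ℂ) (v w : Fin N → (ι × κ → ℂ)),
    (∀ i, vinner (v i) (v i) = 1 ∧ vinner (w i) (w i) = 1 ∧
      SchmidtRankLE k (v i) ∧ SchmidtRankLE k (w i)) ∧
    X = ∑ i, c i • ketBra (v i) (w i) ∧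
    r = ∑ i, ‖c i‖ }

/-- `ρ` is a density matrix. -/
def IsDensity (ρ : Matrix ι ι ℂ) : Prop := ρ.PosSemidef ∧ ρ.trace = 1

/-- `ρ` has Schmidt number at most `k`: it is a convex combination of projections onto
unit vectors of Schmidt rank at most `k`. -/
def SchmidtNumLE (k : ℕ) (ρ : Matrix (ι × κ) (ι × κ) ℂ) : Prop :=
  ∃ (N : ℕ) (p : Fin N → ℝ) (v : Fin N → (ι × κ → ℂ)),
    (∀ i, 0 ≤ p i ∧ vinner (v i) (v i) = 1 ∧ SchmidtRankLE k (v i)) ∧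
    (∑ i, p i) = 1 ∧ ρ = ∑ i, p i • ketBra (v i) (v i)

/-- The robustness norm R_k on Hermitian operators. -/
noncomputable def Rk (k : ℕ) (Y : Matrix (ι × κ) (ι × κ) ℂ) : ℝ :=
  sInf { r | ∃ (c₁ c₂ : ℝ) (ρ₁ ρ₂ : Matrix (ι × κ) (ι × κ) ℂ),
    0 ≤ c₁ ∧ 0 ≤ c₂ ∧ IsDensity ρ₁ ∧ IsDensity ρ₂ ∧
    SchmidtNumLE k ρ₁ ∧ SchmidtNumLE k ρ₂ ∧
    Y = c₁ • ρ₁ - c₂ • ρ₂ ∧ r = c₁ + c₂ }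

/-- `Y` is k-block positive: ⟨v|Y|v⟩ ≥ 0 for every unit vector of Schmidt rank at most `k`. -/
def KBlockPos (k : ℕ) (Y : Matrix (ι × κ) (ι × κ) ℂ) : Prop :=
  ∀ v : ι × κ → ℂ, vinner v v = 1 → SchmidtRankLE k v →
    0 ≤ (vinner v (Y.mulVec v)).re

/-- Dual of a norm on matrices, w.r.t. the Hilbert–Schmidt inner product ⟨W,X⟩ = Tr(Wᴴ X). -/
noncomputable def dualNormM (f : Matrix ι κ ℂ → ℝ) (X : Matrix ι κ ℂ) : ℝ :=
  sSup { r | ∃ W : Matrix ι κ ℂ, f W ≤ 1 ∧ r = ‖(Wᴴ * X).trace‖ }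

/-- Dual of a norm, computed in the real Hilbert space of Hermitian matrices with the
Hilbert–Schmidt inner product ⟨W,Y⟩ = Tr(WY). -/
noncomputable def dualNormHerm (f : Matrix ι ι ℂ → ℝ) (Y : Matrix ι ι ℂ) : ℝ :=
  sSup { r | ∃ W : Matrix ι ι ℂ, W.IsHermitian ∧ f W ≤ 1 ∧ r = |((W * Y).trace).re| }

/-- The Frobenius norm of a matrix. -/
noncomputable def frobNorm (X : Matrix ι κ ℂ) : ℝ :=
  Real.sqrt (∑ i, ∑ j, Complex.normSq (X i j))

/-- The (k,2)-norm: ‖X‖_{(k,2)} = sup { |Tr(XY)| : rank Y ≤ k, ‖Y‖_F ≤ 1 }. -/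
noncomputable def kNorm (k : ℕ) (X : Matrix ι κ ℂ) : ℝ :=
  sSup { r | ∃ Y : Matrix κ ι ℂ, Y.rank ≤ k ∧ frobNorm Y ≤ 1 ∧
    r = ‖(X * Y).trace‖ }

/-- The trace norm: the sum of the singular values, i.e. of the square roots of the
eigenvalues of Xᴴ X. -/
noncomputable def traceNorm [DecidableEq κ] (X : Matrix ι κ ℂ) : ℝ :=
  ∑ i, Real.sqrt ((Matrix.isHermitian_conjTranspose_mul_self X).eigenvalues i)

/-- The s(k) vector norm: sup of |⟨u,w⟩| over unit vectors u of Schmidt rank at most k. -/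
noncomputable def skVecNorm (k : ℕ) (w : ι × κ → ℂ) : ℝ :=
  sSup { r | ∃ u : ι × κ → ℂ, vinner u u = 1 ∧ SchmidtRankLE k u ∧
    r = ‖vinner u w‖ }

/-- Dual of a norm on vectors. -/
noncomputable def dualNormV (f : (ι × κ → ℂ) → ℝ) (v : ι × κ → ℂ) : ℝ :=
  sSup { r | ∃ w : ι × κ → ℂ, f w ≤ 1 ∧ r = ‖vinner w v‖ }

/-- The realignment map, L(X)_{(i,k),(j,l)} = X_{(i,j),(k,l)}. -/
def realign {m n : ℕ} (X : Matrix (Fin m × Fin n) (Fin m × Fin n) ℂ) :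
    Matrix (Fin m × Fin m) (Fin n × Fin n) ℂ :=
  fun p q => X (p.1, q.1) (p.2, q.2)

/-- The projective tensor norm on M_{m,n} ⊗ M_{m,n}. -/
noncomputable def projNorm {m n : ℕ} (Z : Matrix (Fin m × Fin m) (Fin n × Fin n) ℂ) : ℝ :=
  sInf { r | ∃ (N : ℕ) (A B : Fin N → Matrix (Fin m) (Fin n) ℂ),
    Z = ∑ i, A i ⊗ₖ B i ∧ r = ∑ i, traceNorm (A i) * traceNorm (B i) }

/-!
`‖·‖_{γ,k}` is the atomic norm of the set `A` of operators `|v⟩⟨w|` with `v`, `w` unit vectors of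
Schmidt rank at most `k`. A linear functional is dominated by an atomic norm iff it is bounded by
`1` on the atoms, and by Hahn–Banach the norm of a vector is attained by such a functional. On
matrices every functional is `Y ↦ Tr(Wᴴ Y)`, and since `Tr(Wᴴ |v⟩⟨w|)` is the conjugate of
`⟨v|W|w⟩`, boundedness by `1` on `A` means exactly `‖W‖_{S(k)} ≤ 1`.
-/

section AtomicSeminorm

open Submodule

variable {𝕜 E : Type*} [AddCommGroup E] {S : Set E} {x y a : E} {r s : ℝ}

section NormedField

variable [NormedField 𝕜] [Module 𝕜 E]

variable (𝕜 S) in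
/-- The total weights `∑ ‖cᵢ‖` of the representations `x = ∑ cᵢ • aᵢ` of `x` as a finite linear
combination of atoms `aᵢ ∈ S`. Their infimum is the atomic seminorm of `x`. -/
def atomicWeights (x : E) : Set ℝ :=
  {r | ∃ (N : ℕ) (c : Fin N → 𝕜) (a : Fin N → E),
    (∀ i, a i ∈ S) ∧ x = ∑ i, c i • a i ∧ r = ∑ i, ‖c i‖}

theorem nonneg_of_mem_atomicWeights (hr : r ∈ atomicWeights 𝕜 S x) : 0 ≤ r := by
  obtain ⟨N, c, a, -, -, rfl⟩ := hr
  positivity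

theorem bddBelow_atomicWeights : BddBelow (atomicWeights 𝕜 S x) :=
  ⟨0, fun _ => nonneg_of_mem_atomicWeights⟩

theorem zero_mem_atomicWeights_zero : 0 ∈ atomicWeights 𝕜 S 0 :=
  ⟨0, Fin.elim0, Fin.elim0, fun i => i.elim0, by simp, by simp⟩

theorem one_mem_atomicWeights (ha : a ∈ S) : 1 ∈ atomicWeights 𝕜 S a :=
  ⟨1, fun _ => 1, fun _ => a, fun _ => ha, by simp, by simp⟩

theorem add_mem_atomicWeights_add (hr : r ∈ atomicWeights 𝕜 S x) (hs : s ∈ atomicWeights 𝕜 S y) :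
    r + s ∈ atomicWeights 𝕜 S (x + y) := by
  obtain ⟨M, c, a, ha, rfl, rfl⟩ := hr
  obtain ⟨N, d, b, hb, rfl, rfl⟩ := hs
  refine ⟨M + N, Fin.append c d, Fin.append a b, fun i => ?_, ?_, ?_⟩
  · induction i using Fin.addCases with
    | left i => simpa using ha i
    | right i => simpa using hb i
  all_goals simp [Fin.sum_univ_add]

theorem norm_mul_mem_atomicWeights_smul (t : 𝕜) (hr : r ∈ atomicWeights 𝕜 S x) :
    ‖t‖ * r ∈ atomicWeights 𝕜 S (t • x) := by
  obtain ⟨N, c, a, ha, rfl, rfl⟩ := hr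
  exact ⟨N, t • c, a, ha, by simp [Finset.smul_sum, smul_smul], by simp [Finset.mul_sum]⟩

theorem atomicWeights_nonempty (hx : x ∈ span 𝕜 S) : (atomicWeights 𝕜 S x).Nonempty := by
  induction hx using span_induction with
  | mem a ha => exact ⟨1, one_mem_atomicWeights ha⟩
  | zero => exact ⟨0, zero_mem_atomicWeights_zero⟩
  | add x y _ _ hx hy => exact ⟨_, add_mem_atomicWeights_add hx.some_mem hy.some_mem⟩
  | smul t x _ hx => exact ⟨_, norm_mul_mem_atomicWeights_smul t hx.some_mem⟩

theorem sInf_atomicWeights_zero : sInf (atomicWeights 𝕜 S 0) = 0 :=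
  le_antisymm (csInf_le bddBelow_atomicWeights zero_mem_atomicWeights_zero)
    (Real.sInf_nonneg fun _ => nonneg_of_mem_atomicWeights)

theorem sInf_atomicWeights_add_le (hx : x ∈ span 𝕜 S) (hy : y ∈ span 𝕜 S) :
    sInf (atomicWeights 𝕜 S (x + y)) ≤ sInf (atomicWeights 𝕜 S x) + sInf (atomicWeights 𝕜 S y) := by
  rw [← csInf_add (atomicWeights_nonempty hx) bddBelow_atomicWeights
    (atomicWeights_nonempty hy) bddBelow_atomicWeights]
  refine csInf_le_csInf bddBelow_atomicWeights
    ((atomicWeights_nonempty hx).add (atomicWeights_nonempty hy)) ?_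
  rintro _ ⟨r, hr, s, hs, rfl⟩
  exact add_mem_atomicWeights_add hr hs

theorem sInf_atomicWeights_smul_le (t : 𝕜) (hx : x ∈ span 𝕜 S) :
    sInf (atomicWeights 𝕜 S (t • x)) ≤ ‖t‖ * sInf (atomicWeights 𝕜 S x) := by
  rw [← smul_eq_mul, ← Real.sInf_smul_of_nonneg (norm_nonneg t)]
  refine csInf_le_csInf bddBelow_atomicWeights (atomicWeights_nonempty hx).smul_set ?_
  rintro _ ⟨r, hr, rfl⟩
  exact norm_mul_mem_atomicWeights_smul t hr

/-- The atomic seminorm of a spanning set `S` of atoms: the infimum of the total weights of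
representations as a finite linear combination of atoms. -/
noncomputable def atomicSeminorm (hS : span 𝕜 S = ⊤) : Seminorm 𝕜 E :=
  have mem_span (x : E) : x ∈ span 𝕜 S := hS ▸ mem_top
  Seminorm.ofSMulLE (fun x => sInf (atomicWeights 𝕜 S x)) sInf_atomicWeights_zero
    (fun x y => sInf_atomicWeights_add_le (mem_span x) (mem_span y))
    fun t x => sInf_atomicWeights_smul_le t (mem_span x)

theorem atomicSeminorm_le_one (hS : span 𝕜 S = ⊤) (ha : a ∈ S) : atomicSeminorm hS a ≤ 1 :=
  csInf_le bddBelow_atomicWeights (one_mem_atomicWeights ha)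

theorem norm_le_atomicSeminorm (hS : span 𝕜 S = ⊤) {f : Module.Dual 𝕜 E}
    (hf : ∀ a ∈ S, ‖f a‖ ≤ 1) (x : E) : ‖f x‖ ≤ atomicSeminorm hS x := by
  refine le_csInf (atomicWeights_nonempty (hS ▸ mem_top)) ?_
  rintro _ ⟨N, c, a, ha, rfl, rfl⟩
  calc ‖f (∑ i, c i • a i)‖ = ‖∑ i, c i * f (a i)‖ := by simp
    _ ≤ ∑ i, ‖c i * f (a i)‖ := norm_sum_le _ _
    _ ≤ ∑ i, ‖c i‖ := Finset.sum_le_sum fun i _ => by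
      rw [norm_mul]
      exact mul_le_of_le_one_right (norm_nonneg _) (hf _ (ha i))

end NormedField

variable [RCLike 𝕜] [Module 𝕜 E]

theorem exists_dual_eq_seminorm (p : Seminorm 𝕜 E) (x : E) :
    ∃ f : Module.Dual 𝕜 E, f x = p x ∧ ∀ y, ‖f y‖ ≤ p y := by
  let _ : SeminormedAddCommGroup E := p.toSeminormedAddCommGroup
  let _ : NormedSpace 𝕜 E := ⟨fun t y => (map_smul_eq_mul p t y).le⟩
  obtain ⟨f, hf_norm, hfx⟩ := exists_dual_vector'' 𝕜 x
  exact ⟨f, hfx, fun y => f.le_of_opNorm_le hf_norm y |>.trans_eq (one_mul _)⟩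

theorem isGreatest_atomicSeminorm (hS : span 𝕜 S = ⊤) (x : E) :
    IsGreatest {r | ∃ f : Module.Dual 𝕜 E, (∀ a ∈ S, ‖f a‖ ≤ 1) ∧ r = ‖f x‖}
      (atomicSeminorm hS x) := by
  constructor
  · obtain ⟨f, hfx, hf⟩ := exists_dual_eq_seminorm (atomicSeminorm hS) x
    refine ⟨f, fun a ha => (hf a).trans (atomicSeminorm_le_one hS ha), ?_⟩
    rw [hfx, RCLike.norm_of_nonneg (apply_nonneg _ x)]
  · rintro _ ⟨f, hf, rfl⟩
    exact norm_le_atomicSeminorm hS hf x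

end AtomicSeminorm

section HilbertSchmidt

variable {R : Type*} [CommSemiring R] [StarRing R]

/-- The functional `Y ↦ Tr(Wᴴ Y)` on matrices, the Hilbert–Schmidt pairing with `W`. -/
def hilbertSchmidtDual (W : Matrix ι κ R) : Module.Dual R (Matrix ι κ R) :=
  traceLinearMap κ R R ∘ₗ mulLeftLinearMap κ R Wᴴ

theorem hilbertSchmidtDual_apply (W Y : Matrix ι κ R) :
    hilbertSchmidtDual W Y = (Wᴴ * Y).trace := rfl

theorem hilbertSchmidtDual_surjective :
    Function.Surjective (hilbertSchmidtDual : Matrix ι κ R → Module.Dual R (Matrix ι κ R)) := by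
  classical
  intro f
  refine ⟨of fun i j => star (f (single i j 1)), ext_linearMap R fun i j => ?_⟩
  ext
  simp [hilbertSchmidtDual_apply, trace_mul_single]

theorem hilbertSchmidtDual_ketBra (W : Matrix ι κ ℂ) (v : ι → ℂ) (w : κ → ℂ) :
    hilbertSchmidtDual W (ketBra v w) = star (vinner v (W *ᵥ w)) := by
  rw [hilbertSchmidtDual_apply, ketBra, mul_vecMulVec, trace_vecMulVec, vinner,
    ← star_dotProduct, star_mulVec, ← dotProduct_mulVec, dotProduct_comm]

end HilbertSchmidt

section UnitVectors

theorem vinner_eq_inner (v w : ι → ℂ) :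
    vinner v w = inner ℂ (WithLp.toLp 2 v) (WithLp.toLp 2 w) := by
  rw [EuclideanSpace.inner_toLp_toLp, dotProduct_comm, vinner]

theorem norm_toLp_eq_one {v : ι → ℂ} (hv : vinner v v = 1) : ‖WithLp.toLp 2 v‖ = 1 := by
  rw [norm_eq_sqrt_re_inner (𝕜 := ℂ), ← vinner_eq_inner, hv, RCLike.one_re, Real.sqrt_one]

theorem vinner_single_self [DecidableEq ι] (i : ι) :
    vinner (Pi.single i 1) (Pi.single i 1) = 1 := by
  simp [vinner]

open scoped Matrix.Norms.L2Operator in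
theorem norm_vinner_mulVec_le [DecidableEq κ] (W : Matrix ι κ ℂ) {v : ι → ℂ} {w : κ → ℂ}
    (hv : vinner v v = 1) (hw : vinner w w = 1) : ‖vinner v (W *ᵥ w)‖ ≤ ‖W‖ :=
  calc ‖vinner v (W *ᵥ w)‖
      ≤ ‖WithLp.toLp 2 v‖ * ‖WithLp.toLp 2 (W *ᵥ w)‖ := by
        rw [vinner_eq_inner]
        exact norm_inner_le_norm _ _
    _ ≤ ‖WithLp.toLp 2 v‖ * (‖W‖ * ‖WithLp.toLp 2 w‖) := by
        gcongr
        exact l2_opNorm_mulVec W (WithLp.toLp 2 w)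
    _ = ‖W‖ := by rw [norm_toLp_eq_one hv, norm_toLp_eq_one hw, one_mul, mul_one]

end UnitVectors

section SchmidtRank

variable {α β : Type*} {k : ℕ}

theorem schmidtRankLE_prodVec (hk : 1 ≤ k) (a : α → ℂ) (b : β → ℂ) :
    SchmidtRankLE k (prodVec a b) := by
  obtain ⟨l, rfl⟩ := Nat.exists_eq_add_of_le' hk
  refine ⟨Fin.cons a 0, Fin.cons b 0, ?_⟩
  ext p
  simp [Fin.sum_univ_succ, prodVec]

theorem prodVec_single [DecidableEq α] [DecidableEq β] (i : α) (j : β) :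
    prodVec (Pi.single i 1) (Pi.single j 1) = Pi.single (i, j) 1 := by
  ext ⟨i', j'⟩
  simp [prodVec, Pi.single_apply, ← ite_and, and_comm]

theorem schmidtRankLE_single [DecidableEq α] [DecidableEq β] (hk : 1 ≤ k) (p : α × β) :
    SchmidtRankLE k (Pi.single p 1) :=
  prodVec_single p.1 p.2 ▸ schmidtRankLE_prodVec hk _ _

variable (ι κ k) in
/-- The rank-one operators `|v⟩⟨w|` with `v`, `w` unit vectors of Schmidt rank at most `k`: the
atoms of the norm `‖·‖_{γ,k}`. -/
def schmidtAtoms : Set (Matrix (ι × κ) (ι × κ) ℂ) :=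
  {A | ∃ v w : ι × κ → ℂ, (vinner v v = 1 ∧ vinner w w = 1 ∧
    SchmidtRankLE k v ∧ SchmidtRankLE k w) ∧ A = ketBra v w}

theorem single_mem_schmidtAtoms [DecidableEq ι] [DecidableEq κ] (hk : 1 ≤ k) (p q : ι × κ) :
    single p q 1 ∈ schmidtAtoms ι κ k :=
  ⟨Pi.single p 1, Pi.single q 1, ⟨vinner_single_self p, vinner_single_self q,
    schmidtRankLE_single hk p, schmidtRankLE_single hk q⟩, by
    rw [ketBra, Pi.star_single, star_one, single_eq_single_vecMulVec_single]⟩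

theorem span_schmidtAtoms (hk : 1 ≤ k) : Submodule.span ℂ (schmidtAtoms ι κ k) = ⊤ := by
  classical
  refine Submodule.eq_top_iff'.2 fun X => ?_
  rw [matrix_eq_sum_single X]
  refine sum_mem fun p _ => sum_mem fun q _ => ?_
  rw [← mul_one (X p q), ← smul_eq_mul, ← smul_single]
  exact Submodule.smul_mem _ _ (Submodule.subset_span (single_mem_schmidtAtoms hk p q))

theorem gammaNorm_eq_atomicSeminorm (hk : 1 ≤ k) (X : Matrix (ι × κ) (ι × κ) ℂ) :
    gammaNorm k X = atomicSeminorm (span_schmidtAtoms hk) X := by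
  refine congrArg sInf (Set.ext fun r => ⟨?_, ?_⟩)
  · rintro ⟨N, c, v, w, hvw, hX, hr⟩
    exact ⟨N, c, fun i => ketBra (v i) (w i), fun i => ⟨v i, w i, hvw i, rfl⟩, hX, hr⟩
  · rintro ⟨N, c, A, hA, hX, hr⟩
    choose v w hvw hA using hA
    exact ⟨N, c, v, w, hvw, by simpa only [hA] using hX, hr⟩

open scoped Matrix.Norms.L2Operator in
theorem norm_vinner_mulVec_le_SkNorm (W : Matrix (ι × κ) (ι × κ) ℂ) {v w : ι × κ → ℂ}
    (hv : vinner v v = 1) (hw : vinner w w = 1)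
    (hvk : SchmidtRankLE k v) (hwk : SchmidtRankLE k w) :
    ‖vinner v (W *ᵥ w)‖ ≤ SkNorm k W := by
  classical
  refine le_csSup ⟨‖W‖, ?_⟩ ⟨v, w, hv, hw, hvk, hwk, rfl⟩
  rintro _ ⟨v, w, hv, hw, -, -, rfl⟩
  exact norm_vinner_mulVec_le W hv hw

theorem SkNorm_le_one_iff (W : Matrix (ι × κ) (ι × κ) ℂ) :
    SkNorm k W ≤ 1 ↔ ∀ A ∈ schmidtAtoms ι κ k, ‖hilbertSchmidtDual W A‖ ≤ 1 := by
  constructor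
  · rintro hW _ ⟨v, w, ⟨hv, hw, hvk, hwk⟩, rfl⟩
    rw [hilbertSchmidtDual_ketBra, norm_star]
    exact (norm_vinner_mulVec_le_SkNorm W hv hw hvk hwk).trans hW
  · intro hW
    refine Real.sSup_le ?_ zero_le_one
    rintro _ ⟨v, w, hv, hw, hvk, hwk, rfl⟩
    rw [← norm_star, ← hilbertSchmidtDual_ketBra]
    exact hW _ ⟨v, w, ⟨hv, hw, hvk, hwk⟩, rfl⟩

end SchmidtRank

theorem dual_SkNorm_eq_gammaNorm_general {k : ℕ} (hk : 1 ≤ k) (X : Matrix (ι × κ) (ι × κ) ℂ) :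
    dualNormM (SkNorm k) X = gammaNorm k X := by
  have hgreatest := isGreatest_atomicSeminorm (span_schmidtAtoms hk) X
  simp only [hilbertSchmidtDual_surjective.exists, ← SkNorm_le_one_iff] at hgreatest
  rw [gammaNorm_eq_atomicSeminorm hk]
  exact hgreatest.csSup_eq

/-- the dual of the S(k)-norm is the norm ‖·‖_{γ,k}. -/
theorem dual_SkNorm_eq_gammaNorm {m n k : ℕ} (hk1 : 1 ≤ k) (hk : k ≤ min m n)
    (X : Matrix (Fin m × Fin n) (Fin m × Fin n) ℂ) :
    dualNormM (SkNorm k) X = gammaNorm k X :=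
  dual_SkNorm_eq_gammaNorm_general hk1 X

end Ent
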